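/- Let (ψ(q))_{q≥1} be a non-increasing sequence of positive real numbers such that ∑_{q=1}^{∞} ψ(q) diverges. Then for Lebesgue-almost every ω ∈ ℝ, there are infinitely many positive integers q for which there exists an even integer p with gcd(p, q) = 1 and |q·ω − p| < ψ(q). -/

import Mathlib

open MeasureTheory

/-!
In `ℝ / 2ℤ` the points of order `q` are the classes of `2 * m / q` with `m` coprime to `q`, so for
odd `q` they are exactly the fractions `p / q` with `p` even and coprime to `q`. There are at least
`4 ^ k / 72` points of odd order at most `2 ^ k`, and any two are at least `2 / 4 ^ k` apart. Hence
their neighbourhoods of radius `ψ (2 ^ k) / 2 ^ k`, suitably truncated, are quasi-independent for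
varying `k`, and by Cauchy condensation their measures have a divergent sum. By a second moment
estimate the set of points lying in infinitely many of them has positive measure, and Gallagher's
zero-one law upgrades this to full measure.
-/

section SecondMoment

open Filter Set
open scoped ENNReal

variable {α : Type*} [MeasurableSpace α] {μ : Measure α}

theorem sq_lintegral_mul_le {f g : α → ℝ≥0∞} (hf : AEMeasurable f μ) (hg : AEMeasurable g μ) :
    (∫⁻ x, f x * g x ∂μ) ^ 2 ≤ (∫⁻ x, f x ^ 2 ∂μ) * ∫⁻ x, g x ^ 2 ∂μ := by
  have hölder := ENNReal.lintegral_mul_le_Lp_mul_Lq μ Real.HolderConjugate.two_two hf hg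
  simp only [Pi.mul_apply, ENNReal.rpow_two] at hölder
  calc (∫⁻ x, f x * g x ∂μ) ^ 2
      ≤ ((∫⁻ x, f x ^ 2 ∂μ) ^ (1 / 2 : ℝ) * (∫⁻ x, g x ^ 2 ∂μ) ^ (1 / 2 : ℝ)) ^ 2 := by gcongr
    _ = (∫⁻ x, f x ^ 2 ∂μ) * ∫⁻ x, g x ^ 2 ∂μ := by
      rw [mul_pow, ← ENNReal.rpow_mul_natCast, ← ENNReal.rpow_mul_natCast]
      norm_num

/-- The **Chung–Erdős inequality**. -/
theorem sq_sum_measure_le {ι : Type*} (I : Finset ι) {A : ι → Set α}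
    (hA : ∀ i, MeasurableSet (A i)) :
    (∑ i ∈ I, μ (A i)) ^ 2 ≤ (∑ i ∈ I, ∑ j ∈ I, μ (A i ∩ A j)) * μ (⋃ i ∈ I, A i) := by
  set U := ⋃ i ∈ I, A i
  have hU : MeasurableSet U := I.measurableSet_biUnion fun i _ ↦ hA i
  set count : α → ℝ≥0∞ := fun x ↦ ∑ i ∈ I, (A i).indicator 1 x
  have hcount : Measurable count :=
    Finset.measurable_sum I fun i _ ↦ measurable_one.indicator (hA i)
  have count_mul (x : α) : count x * U.indicator 1 x = count x := by
    rw [Finset.sum_mul]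
    refine Finset.sum_congr rfl fun i hi ↦ ?_
    have hAU : A i ⊆ U := Finset.subset_set_biUnion_of_mem hi
    rw [← Pi.mul_apply, ← inter_indicator_one, inter_eq_left.2 hAU]
  have count_sq (x : α) : count x ^ 2 = ∑ i ∈ I, ∑ j ∈ I, (A i ∩ A j).indicator 1 x := by
    simp only [count, sq, Finset.sum_mul_sum, inter_indicator_one, Pi.mul_apply]
  have indicator_sq (x : α) : U.indicator (1 : α → ℝ≥0∞) x ^ 2 = U.indicator 1 x := by
    rw [sq, ← Pi.mul_apply, ← inter_indicator_one, inter_self]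
  have cauchy_schwarz :=
    sq_lintegral_mul_le (μ := μ) hcount.aemeasurable (measurable_one.indicator hU).aemeasurable
  simpa (disch := measurability) only [count_mul, count_sq, indicator_sq, count,
    lintegral_finsetSum, lintegral_indicator_one] using cauchy_schwarz

theorem sq_sum_measureReal_le [IsFiniteMeasure μ] {ι : Type*} (I : Finset ι) {A : ι → Set α}
    (hA : ∀ i, MeasurableSet (A i)) :
    (∑ i ∈ I, μ.real (A i)) ^ 2 ≤
      (∑ i ∈ I, ∑ j ∈ I, μ.real (A i ∩ A j)) * μ.real (⋃ i ∈ I, A i) := by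
  simp only [measureReal_def, ← ENNReal.toReal_sum, ← ENNReal.toReal_pow, ← ENNReal.toReal_mul,
    ne_eq, measure_ne_top, not_false_eq_true, implies_true, ENNReal.sum_ne_top]
  refine ENNReal.toReal_mono (ENNReal.mul_ne_top ?_ (measure_ne_top _ _)) (sq_sum_measure_le I hA)
  simp

theorem sum_sum_le_two_mul_sum_sum_filter_le {ι : Type*} [LinearOrder ι] {P : ι → ι → ℝ}
    (hP₀ : ∀ k l, 0 ≤ P k l) (hP : ∀ k l, P k l = P l k) (J : Finset ι) :
    ∑ k ∈ J, ∑ l ∈ J, P k l ≤ 2 * ∑ l ∈ J, ∑ k ∈ J with k ≤ l, P k l := by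
  have hle (k l : ι) : P k l ≤ (if k ≤ l then P k l else 0) + if l ≤ k then P l k else 0 := by
    rcases le_total k l with h | h
    · rw [if_pos h]
      exact le_add_of_nonneg_right (ite_nonneg (hP₀ l k) le_rfl)
    · rw [if_pos h, hP k l]
      exact le_add_of_nonneg_left (ite_nonneg (hP₀ l k) le_rfl)
  calc ∑ k ∈ J, ∑ l ∈ J, P k l
      ≤ ∑ k ∈ J, ∑ l ∈ J, ((if k ≤ l then P k l else 0) + if l ≤ k then P l k else 0) := by
        gcongr with k _ l _
        exact hle k l
    _ = 2 * ∑ l ∈ J, ∑ k ∈ J with k ≤ l, P k l := by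
        simp only [Finset.sum_add_distrib, Finset.sum_filter, two_mul]
        rw [Finset.sum_comm]

theorem sum_filter_le_pow_sub_le {ρ : ℝ} (hρ₀ : 0 ≤ ρ) (hρ₁ : ρ < 1) (J : Finset ℕ) (l : ℕ) :
    ∑ k ∈ J with k ≤ l, ρ ^ (l - k) ≤ (1 - ρ)⁻¹ := by
  have hinj : InjOn (fun k ↦ l - k) (J.filter (· ≤ l) : Finset ℕ) := by
    intro a ha b hb hab
    simp only [Finset.coe_filter, mem_ofPred_eq] at ha hb hab
    omega
  rw [← Finset.sum_image (f := fun n ↦ ρ ^ n) hinj, ← tsum_geometric_of_lt_one hρ₀ hρ₁]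
  exact (summable_geometric_of_lt_one hρ₀ hρ₁).sum_le_tsum _ fun n _ ↦ pow_nonneg hρ₀ n

/-- Quasi-independence of a sequence of events with constant `C`, up to a correlation of strength
`D` that decays geometrically, at rate `ρ`, in the distance of the indices. -/
def QuasiIndependent (μ : Measure α) (A : ℕ → Set α) (C D ρ : ℝ) : Prop :=
  ∀ k l, k ≤ l →
    μ.real (A k ∩ A l) ≤ C * μ.real (A k) * μ.real (A l) + D * ρ ^ (l - k) * μ.real (A l)

namespace QuasiIndependent

variable {A : ℕ → Set α} {C D ρ : ℝ}

theorem sum_sum_measureReal_inter_le (h : QuasiIndependent μ A C D ρ) (hC : 0 ≤ C) (hD : 0 ≤ D)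
    (hρ₀ : 0 ≤ ρ) (hρ₁ : ρ < 1) (J : Finset ℕ) :
    ∑ k ∈ J, ∑ l ∈ J, μ.real (A k ∩ A l) ≤
      2 * ((C * ∑ k ∈ J, μ.real (A k) + D * (1 - ρ)⁻¹) * ∑ l ∈ J, μ.real (A l)) := by
  refine (sum_sum_le_two_mul_sum_sum_filter_le (fun _ _ ↦ measureReal_nonneg)
    (fun k l ↦ by rw [inter_comm]) J).trans ?_
  rw [Finset.mul_sum J _ (C * _ + _)]
  gcongr with l
  calc ∑ k ∈ J with k ≤ l, μ.real (A k ∩ A l)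
      ≤ ∑ k ∈ J with k ≤ l,
          (C * μ.real (A k) * μ.real (A l) + D * ρ ^ (l - k) * μ.real (A l)) :=
        Finset.sum_le_sum fun k hk ↦ h k l (Finset.mem_filter.1 hk).2
    _ = (C * ∑ k ∈ J with k ≤ l, μ.real (A k) + D * ∑ k ∈ J with k ≤ l, ρ ^ (l - k))
          * μ.real (A l) := by
        simp only [Finset.sum_add_distrib, Finset.mul_sum, Finset.sum_mul, add_mul]
    _ ≤ (C * ∑ k ∈ J, μ.real (A k) + D * (1 - ρ)⁻¹) * μ.real (A l) := by
        gcongr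
        · exact Finset.filter_subset _ _
        · exact sum_filter_le_pow_sub_le hρ₀ hρ₁ J l

variable [IsFiniteMeasure μ]

theorem one_le_mul_measureReal_biUnion (h : QuasiIndependent μ A C D ρ) (hC : 0 ≤ C) (hD : 0 ≤ D)
    (hρ₀ : 0 ≤ ρ) (hρ₁ : ρ < 1) (hA : ∀ k, MeasurableSet (A k)) {J : Finset ℕ}
    (hJ : 1 ≤ ∑ k ∈ J, μ.real (A k)) :
    1 ≤ 2 * (C + D * (1 - ρ)⁻¹) * μ.real (⋃ k ∈ J, A k) := by
  set S := ∑ k ∈ J, μ.real (A k)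
  have : 0 ≤ (1 - ρ)⁻¹ := inv_nonneg.2 (sub_nonneg.2 hρ₁.le)
  have hcorr : ∑ k ∈ J, ∑ l ∈ J, μ.real (A k ∩ A l) ≤ 2 * (C + D * (1 - ρ)⁻¹) * S ^ 2 :=
    calc ∑ k ∈ J, ∑ l ∈ J, μ.real (A k ∩ A l)
        ≤ 2 * ((C * S + D * (1 - ρ)⁻¹) * S) := h.sum_sum_measureReal_inter_le hC hD hρ₀ hρ₁ J
      _ ≤ 2 * ((C * S + D * (1 - ρ)⁻¹ * S) * S) := by
        gcongr 2 * ((_ + ?_) * _)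
        exact le_mul_of_one_le_right (by positivity) hJ
      _ = 2 * (C + D * (1 - ρ)⁻¹) * S ^ 2 := by ring
  have hS₀ : 0 < S ^ 2 := by positivity
  refine le_of_mul_le_mul_left ?_ hS₀
  calc S ^ 2 * 1 ≤ 2 * (C + D * (1 - ρ)⁻¹) * S ^ 2 * μ.real (⋃ k ∈ J, A k) := by
        rw [mul_one]
        exact (sq_sum_measureReal_le J hA).trans (by gcongr)
    _ = S ^ 2 * (2 * (C + D * (1 - ρ)⁻¹) * μ.real (⋃ k ∈ J, A k)) := by ring

/-- A form of the **Kochen–Stone lemma**. -/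
theorem measure_limsup_ne_zero (h : QuasiIndependent μ A C D ρ) (hC : 0 ≤ C) (hD : 0 ≤ D)
    (hρ₀ : 0 ≤ ρ) (hρ₁ : ρ < 1) (hA : ∀ k, MeasurableSet (A k))
    (hdiv : ¬ Summable fun k ↦ μ.real (A k)) :
    μ (limsup A atTop) ≠ 0 := by
  set K := 2 * (C + D * (1 - ρ)⁻¹)
  set U : ℕ → Set α := fun m ↦ ⋃ k ≥ m, A k
  have hK : 0 ≤ K := by have := inv_nonneg.2 (sub_nonneg.2 hρ₁.le); positivity
  have hU (m : ℕ) : 1 ≤ K * μ.real (U m) := by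
    rw [not_summable_iff_tendsto_nat_atTop_of_nonneg fun _ ↦ measureReal_nonneg] at hdiv
    obtain ⟨n, hn, hmn⟩ := ((hdiv.eventually_ge_atTop (1 + ∑ k ∈ Finset.range m, μ.real (A k))).and
      (eventually_ge_atTop m)).exists
    have hsum : 1 ≤ ∑ k ∈ Finset.Ico m n, μ.real (A k) := by
      linarith [Finset.sum_range_add_sum_Ico (fun k ↦ μ.real (A k)) hmn]
    refine (h.one_le_mul_measureReal_biUnion hC hD hρ₀ hρ₁ hA hsum).trans ?_
    gcongr
    · exact measure_ne_top _ _
    · exact iUnion₂_subset fun k hk ↦ subset_biUnion_of_mem (u := A) (Finset.mem_Ico.1 hk).1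
  have hlim : Tendsto (fun m ↦ K * μ.real (U m)) atTop (nhds (K * μ.real (⋂ m, U m))) := by
    refine Tendsto.const_mul K ((ENNReal.tendsto_toReal (measure_ne_top _ _)).comp ?_)
    refine tendsto_measure_iInter_atTop (fun m ↦ ?_) (fun m n hmn ↦ ?_) ⟨0, measure_ne_top _ _⟩
    · exact (MeasurableSet.biUnion (to_countable _) fun k _ ↦ hA k).nullMeasurableSet
    · exact biUnion_subset_biUnion_left fun k hk ↦ hmn.trans hk
  have hpos : 1 ≤ K * μ.real (⋂ m, U m) := ge_of_tendsto' hlim hU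
  have hlimsup : limsup A atTop = ⋂ m, U m := by
    simp only [limsup_eq_iInf_iSup_of_nat, U, iInf_eq_iInter, iSup_eq_iUnion]
  intro hzero
  rw [← hlimsup, measureReal_def, hzero] at hpos
  norm_num at hpos

end QuasiIndependent

end SecondMoment

section SeparatedSets

open Filter Metric

variable {T : ℝ} [hT : Fact (0 < T)]

theorem measureReal_circle_ball (x : AddCircle T) {r : ℝ} (hr : 0 ≤ r) :
    volume.real (ball x r) = min T (2 * r) := by
  rw [measureReal_def, ← measure_congr AddCircle.closedBall_ae_eq_ball,
    AddCircle.volume_closedBall, ENNReal.toReal_ofReal (le_min hT.out.le (by positivity))]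

section Finset

variable {F G : Finset (AddCircle T)} {r r' s : ℝ}

theorem measureReal_thickening_of_separated
    (hF : (F : Set (AddCircle T)).Pairwise fun x y ↦ 2 * r ≤ dist x y)
    (hr : 0 ≤ r) (hrT : 2 * r ≤ T) :
    volume.real (thickening r (F : Set (AddCircle T))) = F.card * (2 * r) := by
  have hdisj : (F : Set (AddCircle T)).PairwiseDisjoint fun x ↦ ball x r :=
    fun x hx y hy hxy ↦ ball_disjoint_ball (by linarith [hF hx hy hxy])
  rw [thickening_eq_biUnion_ball]
  simp only [Finset.mem_coe]
  rw [measureReal_biUnion_finset hdisj fun x _ ↦ measurableSet_ball]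
  simp only [measureReal_circle_ball _ hr, min_eq_right hrT, Finset.sum_const, nsmul_eq_mul]

theorem card_mul_eq_measureReal_thickening
    (hF : (F : Set (AddCircle T)).Pairwise fun x y ↦ s ≤ dist x y) (hs : 0 ≤ s) (hsT : s ≤ T) :
    F.card * s = volume.real (thickening (s / 2) (F : Set (AddCircle T))) := by
  have hs2 : 2 * (s / 2) = s := mul_div_cancel₀ s two_ne_zero
  rw [measureReal_thickening_of_separated (by rwa [hs2]) (by positivity) (by rwa [hs2]), hs2]

theorem card_mul_le_of_separated
    (hF : (F : Set (AddCircle T)).Pairwise fun x y ↦ s ≤ dist x y) (hs : 0 ≤ s) (hsT : s ≤ T) :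
    F.card * s ≤ T := by
  rw [card_mul_eq_measureReal_thickening hF hs hsT]
  refine (measureReal_mono (Set.subset_univ _)).trans_eq ?_
  rw [measureReal_def, AddCircle.measure_univ, ENNReal.toReal_ofReal hT.out.le]

theorem card_filter_dist_lt_mul_le_of_separated
    (hF : (F : Set (AddCircle T)).Pairwise fun x y ↦ s ≤ dist x y) (hs : 0 ≤ s) (hsT : s ≤ T)
    (x : AddCircle T) (hr : 0 ≤ r) :
    (F.filter (dist · x < r)).card * s ≤ 2 * r + s := by
  have hsub : thickening (s / 2) (F.filter (dist · x < r) : Set (AddCircle T)) ⊆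
      ball x (s / 2 + r) := by
    rw [← thickening_singleton]
    refine (thickening_subset_of_subset _ fun y hy ↦ ?_).trans (thickening_thickening_subset _ _ _)
    rw [thickening_singleton]
    exact (Finset.mem_filter.1 hy).2
  rw [card_mul_eq_measureReal_thickening
    (hF.mono (Finset.coe_subset.2 (Finset.filter_subset _ _))) hs hsT]
  calc volume.real (thickening (s / 2) (F.filter (dist · x < r) : Set (AddCircle T)))
      ≤ volume.real (ball x (s / 2 + r)) := measureReal_mono hsub
    _ ≤ 2 * (s / 2 + r) := by
        rw [measureReal_circle_ball x (by positivity)]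
        exact min_le_right _ _
    _ = 2 * r + s := by ring

theorem measureReal_ball_inter_thickening_le
    (hG : (G : Set (AddCircle T)).Pairwise fun x y ↦ s ≤ dist x y) (hs : 0 < s) (hsT : s ≤ T)
    (x : AddCircle T) (hr' : 0 ≤ r') (hr : r' ≤ r) :
    volume.real (ball x r ∩ thickening r' (G : Set (AddCircle T))) ≤
      (4 * r / s + 1) * (2 * r') := by
  set N := G.filter (dist · x < 2 * r)
  have hsub : ball x r ∩ thickening r' (G : Set (AddCircle T)) ⊆ ⋃ y ∈ N, ball y r' := by
    rintro z ⟨hzx, hz⟩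
    obtain ⟨y, hy, hzy⟩ := mem_thickening_iff.1 hz
    have hyx : dist y x < 2 * r := by
      linarith [dist_triangle_left y x z, mem_ball.1 hzx]
    exact Set.mem_biUnion (Finset.mem_filter.2 ⟨hy, hyx⟩) hzy
  have hN : N.card ≤ 4 * r / s + 1 := by
    have := card_filter_dist_lt_mul_le_of_separated hG hs.le hsT x (r := 2 * r) (by linarith)
    rw [div_add_one hs.ne', le_div_iff₀ hs]
    linarith
  calc volume.real (ball x r ∩ thickening r' (G : Set (AddCircle T)))
      ≤ ∑ y ∈ N, volume.real (ball y r') :=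
        (measureReal_mono hsub (measure_ne_top _ _)).trans (measureReal_biUnion_finset_le _ _)
    _ ≤ ∑ y ∈ N, 2 * r' := by
        gcongr with y
        rw [measureReal_circle_ball y hr']
        exact min_le_right _ _
    _ ≤ (4 * r / s + 1) * (2 * r') := by
        rw [Finset.sum_const, nsmul_eq_mul]
        gcongr

theorem measureReal_thickening_inter_thickening_le
    (hG : (G : Set (AddCircle T)).Pairwise fun x y ↦ s ≤ dist x y) (hs : 0 < s) (hsT : s ≤ T)
    (hr' : 0 ≤ r') (hr : r' ≤ r) :
    volume.real (thickening r (F : Set (AddCircle T)) ∩ thickening r' (G : Set (AddCircle T))) ≤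
      F.card * ((4 * r / s + 1) * (2 * r')) := by
  rw [thickening_eq_biUnion_ball (E := (F : Set (AddCircle T))), Set.iUnion₂_inter,
    ← nsmul_eq_mul, ← Finset.sum_const]
  refine (measureReal_biUnion_finset_le F _).trans ?_
  gcongr with x
  exact measureReal_ball_inter_thickening_le hG hs hsT x hr' hr

end Finset

variable {F : ℕ → Finset (AddCircle T)} {b c : ℝ} {r : ℕ → ℝ}

theorem quasiIndependent_thickening (hb : 1 ≤ b) (hc : 0 < c)
    (hsep : ∀ k, (F k : Set (AddCircle T)).Pairwise fun x y ↦ T / b ^ k ≤ dist x y)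
    (hcard : ∀ k, c * b ^ k ≤ (F k).card) (hr : Antitone r) (hr₀ : ∀ k, 0 ≤ r k)
    (hrT : ∀ k, 2 * r k ≤ T / b ^ k) :
    QuasiIndependent volume (fun k ↦ thickening (r k) (F k : Set (AddCircle T)))
      (2 / (c * T)) c⁻¹ b⁻¹ := by
  intro k l hkl
  have hT₀ : 0 < T := hT.out
  have hb₀ (m : ℕ) : 0 < b ^ m := pow_pos (by linarith) m
  have hsT (m : ℕ) : T / b ^ m ≤ T := div_le_self hT₀.le (one_le_pow₀ hb)
  have hvol (m : ℕ) := measureReal_thickening_of_separated (r := r m)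
    ((hsep m).imp fun x y ↦ (hrT m).trans) (hr₀ m) ((hrT m).trans (hsT m))
  have hcard_le : (F k).card ≤ b ^ k := by
    have := card_mul_le_of_separated (hsep k) (div_pos hT₀ (hb₀ k)).le (hsT k)
    rw [mul_div_assoc', div_le_iff₀ (hb₀ k), mul_comm] at this
    exact le_of_mul_le_mul_left this hT₀
  have hpow : b ^ k = b⁻¹ ^ (l - k) * b ^ l := by
    rw [← Nat.sub_add_cancel hkl, Nat.add_sub_cancel, pow_add, inv_pow]
    field_simp [(hb₀ _).ne']
  have hl : b ^ l ≤ c⁻¹ * (F l).card := by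
    rw [inv_mul_eq_div, le_div_iff₀' hc]
    exact hcard l
  rw [hvol, hvol]
  calc volume.real (thickening (r k) (F k : Set (AddCircle T)) ∩ thickening (r l) (F l))
      ≤ (F k).card * ((4 * r k / (T / b ^ l) + 1) * (2 * r l)) :=
        measureReal_thickening_inter_thickening_le (hsep l) (div_pos hT₀ (hb₀ l)) (hsT l)
          (hr₀ l) (hr hkl)
    _ = 2 / T * ((F k).card * (2 * r k)) * (b ^ l * (2 * r l)) + (F k).card * (2 * r l) := by
        field_simp
        ring
    _ ≤ 2 / T * ((F k).card * (2 * r k)) * (c⁻¹ * (F l).card * (2 * r l)) +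
          b⁻¹ ^ (l - k) * (c⁻¹ * (F l).card) * (2 * r l) := by
        have := hr₀ k
        have := hr₀ l
        gcongr
        exact hcard_le.trans (hpow.trans_le (by gcongr))
    _ = _ := by
        field_simp

theorem volume_limsup_thickening_ne_zero (hb : 1 < b) (hc : 0 < c)
    (hsep : ∀ k, (F k : Set (AddCircle T)).Pairwise fun x y ↦ T / b ^ k ≤ dist x y)
    (hcard : ∀ k, c * b ^ k ≤ (F k).card) (hr : Antitone r) (hr₀ : ∀ k, 0 ≤ r k)
    (hrT : ∀ k, 2 * r k ≤ T / b ^ k) (hdiv : ¬ Summable fun k ↦ b ^ k * r k) :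
    volume (limsup (fun k ↦ thickening (r k) (F k : Set (AddCircle T))) atTop) ≠ 0 := by
  have hT₀ : 0 < T := hT.out
  refine (quasiIndependent_thickening hb.le hc hsep hcard hr hr₀ hrT).measure_limsup_ne_zero
    (by positivity) (by positivity) (by positivity) (inv_lt_one_of_one_lt₀ hb)
    (fun k ↦ isOpen_thickening.measurableSet) fun hsum ↦ hdiv ?_
  refine (hsum.mul_left (2 * c)⁻¹).of_nonneg_of_le (fun k ↦ by have := hr₀ k; positivity)
    fun k ↦ ?_
  have hsT : T / b ^ k ≤ T := div_le_self hT₀.le (one_le_pow₀ hb.le)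
  rw [measureReal_thickening_of_separated ((hsep k).imp fun x y ↦ (hrT k).trans) (hr₀ k)
    ((hrT k).trans hsT), inv_mul_eq_div, le_div_iff₀' (by positivity)]
  calc 2 * c * (b ^ k * r k) = c * b ^ k * (2 * r k) := by ring
    _ ≤ (F k).card * (2 * r k) := by
      have := hr₀ k
      gcongr
      exact hcard k

end SeparatedSets

section FareyPoints

open Finset

theorem finite_setOf_addOrderOf_le (T : ℝ) [Fact (0 < T)] (Q : ℕ) :
    {x : AddCircle T | 0 < addOrderOf x ∧ addOrderOf x ≤ Q}.Finite := by
  refine ((Set.finite_Ioc 0 Q).biUnion fun q hq ↦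
    AddCircle.finite_setOfPred_addOrderOf_eq T hq.1).subset fun x hx ↦ ?_
  simpa using hx

/-- The Farey points of level `Q` on the circle of length `T`: the points of finite order at most
`Q` whose order satisfies `P`. A point of order `q` is `m / q * T` with `m` coprime to `q`, so the
order plays the role of the denominator. -/
noncomputable def fareyPoints (T : ℝ) [Fact (0 < T)] (P : ℕ → Prop) [DecidablePred P] (Q : ℕ) :
    Finset (AddCircle T) :=
  {x ∈ (finite_setOf_addOrderOf_le T Q).toFinset | P (addOrderOf x)}

variable {T : ℝ} [Fact (0 < T)] {P : ℕ → Prop} [DecidablePred P] {Q : ℕ}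

theorem mem_fareyPoints {x : AddCircle T} :
    x ∈ fareyPoints T P Q ↔ (0 < addOrderOf x ∧ addOrderOf x ≤ Q) ∧ P (addOrderOf x) := by
  simp [fareyPoints]

theorem card_fareyPoints : (fareyPoints T P Q).card = ∑ q ∈ Ioc 0 Q with P q, q.totient := by
  have horder {x : AddCircle T} (hx : x ∈ fareyPoints T P Q) :
      addOrderOf x ∈ (Ioc 0 Q).filter P := by
    simpa using mem_fareyPoints.1 hx
  rw [card_eq_sum_card_fiberwise fun x hx ↦ horder hx]
  refine sum_congr rfl fun q hq ↦ ?_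
  rw [mem_filter, mem_Ioc] at hq
  rw [← AddCircle.card_addOrderOf_eq_totient T]
  refine (Nat.subtype_card _ fun x ↦ ?_).symm
  rw [mem_filter, mem_fareyPoints, and_iff_right_iff_imp]
  rintro rfl
  exact hq

theorem pairwise_fareyPoints_le_dist :
    (fareyPoints T P Q : Set (AddCircle T)).Pairwise fun x y ↦ T / Q ^ 2 ≤ dist x y := by
  intro x hx y hy hxy
  obtain ⟨⟨hx₀, hxQ⟩, -⟩ := mem_fareyPoints.1 hx
  obtain ⟨⟨hy₀, hyQ⟩, -⟩ := mem_fareyPoints.1 hy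
  have hsmul : (addOrderOf x * addOrderOf y) • (x - y) = 0 := by
    rw [nsmul_sub, mul_nsmul, addOrderOf_nsmul_eq_zero, mul_comm, mul_nsmul,
      addOrderOf_nsmul_eq_zero, nsmul_zero, nsmul_zero, sub_zero]
  have hmul : 0 < addOrderOf x * addOrderOf y := Nat.mul_pos hx₀ hy₀
  have horder : addOrderOf (x - y) ≤ Q ^ 2 := by
    rw [sq]
    exact (addOrderOf_le_of_nsmul_eq_zero hmul hsmul).trans (Nat.mul_le_mul hxQ hyQ)
  have hQ : (0 : ℝ) < Q ^ 2 := by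
    have := hx₀.trans_le hxQ
    positivity
  rw [dist_eq_norm, div_le_iff₀' hQ]
  calc T ≤ addOrderOf (x - y) • ‖x - y‖ :=
        AddCircle.le_add_order_smul_norm_of_isOfFinAddOrder
          (isOfFinAddOrder_iff_nsmul_eq_zero.2 ⟨_, hmul, hsmul⟩) (sub_ne_zero.2 hxy)
    _ ≤ Q ^ 2 * ‖x - y‖ := by
        rw [nsmul_eq_mul]
        gcongr
        exact_mod_cast horder

end FareyPoints

section Condensation

open Filter Set

theorem not_summable_min_const {ι : Type*} {a : ι → ℝ} (ha : ¬ Summable a)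
    {c : ℝ} (hc : 0 < c) : ¬ Summable fun k ↦ min (a k) c := by
  intro hsum
  refine ha (hsum.congr_cofinite ?_)
  filter_upwards [hsum.tendsto_cofinite_zero.eventually_lt_const hc] with k hk
  exact min_eq_left (le_of_lt ((min_lt_iff.1 hk).resolve_right (lt_irrefl c)))

theorem not_summable_of_tendsto_sum_atTop {ι κ : Type*} {f : ι → ℝ} {l : Filter κ} [l.NeBot]
    {s : κ → Finset ι} (h : Tendsto (fun n ↦ ∑ i ∈ s n, f i) l atTop) : ¬ Summable f := by
  intro hf
  obtain ⟨n, hn⟩ := (h.eventually_gt_atTop (∑' i, |f i|)).exists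
  refine hn.not_ge ?_
  calc ∑ i ∈ s n, f i ≤ ∑ i ∈ s n, |f i| := Finset.sum_le_sum fun i _ ↦ le_abs_self (f i)
    _ ≤ ∑' i, |f i| := hf.abs.sum_le_tsum _ fun i _ ↦ abs_nonneg (f i)

theorem not_summable_two_pow_mul {ψ : ℕ → ℝ} (hψ₀ : ∀ q ≥ 1, 0 ≤ ψ q) (hψ : AntitoneOn ψ (Ici 1))
    (hdiv : ¬ Summable ψ) : ¬ Summable fun k ↦ (2 : ℝ) ^ k * ψ (2 ^ k) := by
  rwa [summable_condensed_iff_of_eventually_nonneg]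
  · filter_upwards [eventually_ge_atTop 1] with q hq using hψ₀ q hq
  · filter_upwards [eventually_ge_atTop 1] with q hq
    exact hψ hq (hq.trans (Nat.le_succ q)) (Nat.le_succ q)

end Condensation

section KhinchinOnCircle

open Filter Metric Set
open scoped Topology

theorem antitoneOn_div_natCast {ψ : ℕ → ℝ} (hψ₀ : ∀ q ≥ 1, 0 ≤ ψ q) (hψ : AntitoneOn ψ (Ici 1)) :
    AntitoneOn (fun q : ℕ ↦ ψ q / q) (Ici 1) := by
  intro q hq q' hq' hqq'
  have hq₀ : (0 : ℝ) < q := Nat.cast_pos.2 hq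
  exact div_le_div₀ (hψ₀ q hq) (hψ hq hq' hqq') hq₀ (Nat.cast_le.2 hqq')

theorem tendsto_div_natCast_zero {ψ : ℕ → ℝ} (hψ₀ : ∀ q ≥ 1, 0 ≤ ψ q) (hψ : AntitoneOn ψ (Ici 1)) :
    Tendsto (fun q : ℕ ↦ ψ q / q) atTop (𝓝 0) := by
  refine squeeze_zero' ?_ ?_ (tendsto_const_div_atTop_nhds_zero_nat (ψ 1))
  · filter_upwards [eventually_ge_atTop 1] with q hq
    exact div_nonneg (hψ₀ q hq) q.cast_nonneg
  · filter_upwards [eventually_ge_atTop 1] with q hq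
    exact div_le_div_of_nonneg_right (hψ self_mem_Ici hq hq) q.cast_nonneg

theorem mem_of_frequently_mem_thickening {X ι : Type*} [PseudoEMetricSpace X] {E : Set X}
    (hE : IsClosed E) {l : Filter ι} {r : ι → ℝ} (hr : Tendsto r l (𝓝 0)) {x : X}
    (hx : ∃ᶠ i in l, x ∈ thickening (r i) E) : x ∈ E := by
  rw [← hE.closure_eq, closure_eq_iInter_thickening]
  refine mem_iInter₂.2 fun δ hδ ↦ ?_
  obtain ⟨i, hi, hri⟩ := (hx.and_eventually (hr.eventually_lt_const hδ)).exists
  exact thickening_mono hri.le E hi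

theorem mem_addWellApproximable_iff_infinite {A : Type*} [SeminormedAddGroup A] {δ : ℕ → ℝ}
    {a : A} :
    a ∈ addWellApproximable A δ ↔ {q | 0 < q ∧ a ∈ approxAddOrderOf A q (δ q)}.Infinite := by
  rw [mem_add_wellApproximable_iff, ← Nat.cofinite_eq_atTop, cofinite.blimsup_set_eq]
  rfl

variable {T : ℝ} [hT : Fact (0 < T)] {P : ℕ → Prop} [DecidablePred P] {ψ : ℕ → ℝ}

theorem volume_limsup_thickening_fareyPoints_ne_zero {c : ℝ} (hc : 0 < c)
    (hP : ∀ Q : ℕ, c * Q ^ 2 ≤ ∑ q ∈ Finset.Ioc 0 Q with P q, q.totient)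
    (hψ₀ : ∀ q ≥ 1, 0 ≤ ψ q) (hψ : AntitoneOn ψ (Ici 1)) (hdiv : ¬ Summable ψ) :
    volume (limsup (fun k ↦ thickening (ψ (2 ^ k) / (2 ^ k : ℕ))
      (fareyPoints T P (2 ^ k) : Set (AddCircle T))) atTop) ≠ 0 := by
  have hT₀ : 0 < T := hT.out
  have hsq (k : ℕ) : ((2 ^ k : ℕ) : ℝ) ^ 2 = 4 ^ k := by
    rw [Nat.cast_pow, ← pow_mul, mul_comm, pow_mul]
    norm_num
  -- Truncating the radii makes the balls around the Farey points of one level disjoint.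
  set r : ℕ → ℝ := fun k ↦ min (ψ (2 ^ k) / (2 ^ k : ℕ)) (T / 2 / 4 ^ k)
  have hr : Antitone r := by
    intro k l hkl
    refine min_le_min (antitoneOn_div_natCast hψ₀ hψ Nat.one_le_two_pow Nat.one_le_two_pow
      (Nat.pow_le_pow_right two_pos hkl)) ?_
    gcongr
    norm_num
  have hr₀ (k : ℕ) : 0 ≤ r k :=
    le_min (div_nonneg (hψ₀ _ Nat.one_le_two_pow) (Nat.cast_nonneg _)) (by positivity)
  have hrT (k : ℕ) : 2 * r k ≤ T / 4 ^ k := by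
    calc 2 * r k ≤ 2 * (T / 2 / 4 ^ k) := by gcongr; exact min_le_right _ _
      _ = T / 4 ^ k := by ring
  have hrdiv : ¬ Summable fun k ↦ (4 : ℝ) ^ k * r k := by
    convert not_summable_min_const (not_summable_two_pow_mul hψ₀ hψ hdiv) (half_pos hT₀)
      using 3 with k
    rw [mul_min_of_nonneg _ _ (by positivity), mul_div_cancel₀ _ (by positivity), ← hsq,
      Nat.cast_pow, Nat.cast_ofNat]
    congr 1
    field_simp
  have hpos := volume_limsup_thickening_ne_zero (F := fun k ↦ fareyPoints T P (2 ^ k))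
    (by norm_num) hc (fun k ↦ hsq k ▸ pairwise_fareyPoints_le_dist)
    (fun k ↦ by rw [card_fareyPoints, ← hsq]; exact hP _) hr hr₀ hrT hrdiv
  refine fun hzero ↦ hpos (measure_mono_null (limsup_le_limsup ?_) hzero)
  exact .of_forall fun k ↦ thickening_mono (min_le_left _ _) _

theorem limsup_thickening_fareyPoints_subset (hψ₀ : ∀ q ≥ 1, 0 ≤ ψ q) (hψ : AntitoneOn ψ (Ici 1)) :
    limsup (fun k ↦ thickening (ψ (2 ^ k) / (2 ^ k : ℕ))
      (fareyPoints T P (2 ^ k) : Set (AddCircle T))) atTop ⊆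
    addWellApproximable (AddCircle T) (fun q ↦ if P q then ψ q / q else 0) ∪
      {x | IsOfFinAddOrder x} := by
  intro x hx
  rw [mem_limsup_iff_frequently_mem] at hx
  refine or_iff_not_imp_left.2 fun hnot ↦ ?_
  rw [mem_addWellApproximable_iff_infinite, not_infinite] at hnot
  obtain ⟨M, hM⟩ := hnot.bddAbove
  have hxM : ∃ᶠ k in atTop, x ∈ thickening (ψ (2 ^ k) / (2 ^ k : ℕ))
      (fareyPoints T P M : Set (AddCircle T)) := by
    refine hx.mono fun k hk ↦ ?_
    obtain ⟨y, hy, hxy⟩ := mem_thickening_iff.1 hk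
    obtain ⟨⟨hy₀, hyk⟩, hPy⟩ := mem_fareyPoints.1 hy
    refine mem_thickening_iff.2 ⟨y, mem_fareyPoints.2 ⟨⟨hy₀, hM ⟨hy₀, ?_⟩⟩, hPy⟩, hxy⟩
    rw [if_pos hPy, mem_approx_add_orderOf_iff]
    exact ⟨y, rfl, hxy.trans_le
      (antitoneOn_div_natCast hψ₀ hψ hy₀ Nat.one_le_two_pow hyk)⟩
  have hr : Tendsto (fun k ↦ ψ (2 ^ k) / (2 ^ k : ℕ)) atTop (𝓝 0) :=
    (tendsto_div_natCast_zero hψ₀ hψ).comp (tendsto_pow_atTop_atTop_of_one_lt one_lt_two)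
  have hxmem := mem_of_frequently_mem_thickening (Finset.finite_toSet _).isClosed hr hxM
  exact addOrderOf_pos_iff.1 (mem_fareyPoints.1 hxmem).1.1

theorem volume_setOf_isOfFinAddOrder : volume {x : AddCircle T | IsOfFinAddOrder x} = 0 := by
  have hcount : {x : AddCircle T | IsOfFinAddOrder x}.Countable := by
    refine (countable_iUnion fun Q ↦ (finite_setOf_addOrderOf_le T Q).countable).mono fun x hx ↦ ?_
    exact mem_iUnion.2 ⟨addOrderOf x, hx.addOrderOf_pos, le_rfl⟩
  have : NullSingletonClass (volume : Measure (AddCircle T)) :=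
    ⟨fun x ↦ by simp [← closedBall_zero, AddCircle.volume_closedBall, hT.out.le]⟩
  exact hcount.measure_zero _

theorem ae_mem_addWellApproximable {c : ℝ} (hc : 0 < c)
    (hP : ∀ Q : ℕ, c * Q ^ 2 ≤ ∑ q ∈ Finset.Ioc 0 Q with P q, q.totient)
    (hψ₀ : ∀ q ≥ 1, 0 ≤ ψ q) (hψ : AntitoneOn ψ (Ici 1)) (hdiv : ¬ Summable ψ) :
    ∀ᵐ x : AddCircle T,
      x ∈ addWellApproximable (AddCircle T) fun q ↦ if P q then ψ q / q else 0 := by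
  set δ : ℕ → ℝ := fun q ↦ if P q then ψ q / q else 0
  have hδ : Tendsto δ atTop (𝓝 0) := by
    refine squeeze_zero_norm' ?_ (tendsto_div_natCast_zero hψ₀ hψ)
    filter_upwards [eventually_ge_atTop 1] with q hq
    have hnonneg : 0 ≤ ψ q / q := div_nonneg (hψ₀ q hq) q.cast_nonneg
    dsimp only [δ]
    split_ifs
    · exact (Real.norm_of_nonneg hnonneg).le
    · rwa [norm_zero]
  rcases AddCircle.addWellApproximable_ae_empty_or_univ (T := T) δ hδ with hempty | huniv
  · refine absurd ?_ (volume_limsup_thickening_fareyPoints_ne_zero (T := T) hc hP hψ₀ hψ hdiv)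
    refine measure_mono_null (limsup_thickening_fareyPoints_subset hψ₀ hψ) ?_
    exact measure_union_null (compl_mem_ae_iff.1 hempty) volume_setOf_isOfFinAddOrder
  · exact huniv

end KhinchinOnCircle

section Line

open Set

variable {T : ℝ} [hT : Fact (0 < T)]

theorem ae_coe_of_ae_addCircle {p : AddCircle T → Prop} (hp : ∀ᵐ x, p x) : ∀ᵐ y : ℝ, p y := by
  rw [← Measure.restrict_univ (μ := volume), ← iUnion_Ioc_add_zsmul hT.out 0,
    ae_restrict_iUnion_iff]
  intro n
  rw [add_zsmul, one_zsmul, ← add_assoc]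
  exact (AddCircle.measurePreserving_mk T _).quasiMeasurePreserving.ae hp

theorem exists_int_gcd_eq_one_of_mem_approxAddOrderOf {q : ℕ} (hq : 0 < q) {x δ : ℝ}
    (hx : (x : AddCircle T) ∈ approxAddOrderOf (AddCircle T) q δ) :
    ∃ m : ℤ, m.gcd q = 1 ∧ |x - m / q * T| < δ := by
  obtain ⟨u, hu, hxu⟩ := mem_approx_add_orderOf_iff.1 hx
  obtain ⟨m, -, hm, rfl⟩ := (AddCircle.addOrderOf_eq_pos_iff hq).1 hu
  rw [mem_ball_iff_norm, ← AddCircle.coe_sub, AddCircle.norm_eq] at hxu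
  set k := round (T⁻¹ * (x - m / q * T))
  refine ⟨m + q * k, by simpa using hm, ?_⟩
  convert hxu using 2
  push_cast
  field_simp
  ring

theorem exists_even_of_mem_approxAddOrderOf {q : ℕ} (hq : Odd q) {x ε : ℝ}
    (hx : (x : AddCircle (2 : ℝ)) ∈ approxAddOrderOf (AddCircle (2 : ℝ)) q (ε / q)) :
    ∃ p : ℤ, Even p ∧ p.gcd q = 1 ∧ |q * x - p| < ε := by
  have : Fact ((0 : ℝ) < 2) := ⟨two_pos⟩
  obtain ⟨m, hm, hxm⟩ := exists_int_gcd_eq_one_of_mem_approxAddOrderOf hq.pos hx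
  have hq₀ : (0 : ℝ) < q := Nat.cast_pos.2 hq.pos
  refine ⟨2 * m, even_two_mul m, ?_, ?_⟩
  · rw [← Int.isCoprime_iff_gcd_eq_one] at hm ⊢
    exact .mul_left (Nat.isCoprime_iff_coprime.2 (Nat.coprime_two_left.2 hq)) hm
  · have hscale : (q : ℝ) * x - (2 * m : ℤ) = q * (x - m / q * 2) := by
      push_cast
      field_simp
    rwa [hscale, abs_mul, Nat.abs_cast, ← lt_div_iff₀' hq₀]

end Line

section OddTotientSum

open Finset ArithmeticFunction

theorem sum_Ioc_odd (n : ℕ) : ∑ q ∈ Ioc 0 n with Odd q, q = ((n + 1) / 2) ^ 2 := by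
  induction n with
  | zero => rfl
  | succ n ih =>
    rw [sum_filter, sum_Ioc_succ_top n.zero_le, ← sum_filter, ih]
    split_ifs with hodd
    · obtain ⟨m, rfl : n = 2 * m⟩ : ∃ m, n = 2 * m := ⟨n / 2, by grind⟩
      rw [show (2 * m + 1) / 2 = m by omega, show (2 * m + 1 + 1) / 2 = m + 1 by omega]
      ring
    · rw [show (n + 1 + 1) / 2 = (n + 1) / 2 by grind, add_zero]

theorem sum_odd_sum_odd_totient (N : ℕ) :
    ∑ d ∈ Ioc 0 N with Odd d, ∑ q ∈ Ioc 0 (N / d) with Odd q, q.totient =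
      ∑ n ∈ Ioc 0 N with Odd n, n := by
  let χ : ArithmeticFunction ℕ := ⟨fun n ↦ if Odd n then 1 else 0, by simp⟩
  let χφ : ArithmeticFunction ℕ := ⟨fun n ↦ if Odd n then n.totient else 0, by simp⟩
  have hmul (n : ℕ) : (χ * χφ) n = if Odd n then n else 0 := by
    calc (χ * χφ) n = ∑ x ∈ n.divisorsAntidiagonal, if Odd n then x.2.totient else 0 := by
          rw [mul_apply]
          refine sum_congr rfl fun x hx ↦ ?_
          rw [← (Nat.mem_divisorsAntidiagonal.1 hx).1]
          simp [χ, χφ, Nat.odd_mul, ← ite_and, and_comm]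
      _ = if Odd n then n else 0 := by
          split_ifs
          · rw [Nat.sum_divisorsAntidiagonal' (f := fun _ q ↦ q.totient), Nat.sum_totient]
          · exact sum_const_zero
  simp only [sum_filter]
  rw [← sum_congr rfl fun n _ ↦ hmul n, sum_Ioc_mul_eq_sum_sum]
  refine sum_congr rfl fun d _ ↦ ?_
  simp [χ, χφ]

-- Telescoping `1 / (2 * j + 3) ^ 2 ≤ (1 / (j + 1) - 1 / (j + 2)) / 4` from `j = 1` on, and keeping
-- the term `1 / 9` at `j = 0`, gives the constant `1 / 9 + 1 / 8 = 17 / 72`.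
theorem sum_range_one_div_sq_le (n : ℕ) :
    ∑ j ∈ range (n + 1), 1 / (2 * (j : ℝ) + 3) ^ 2 ≤ 17 / 72 - 1 / (4 * ((n : ℝ) + 2)) := by
  induction n with
  | zero => norm_num
  | succ n ih =>
    have htele : (1 : ℝ) / (2 * (n + 1 : ℕ) + 3) ^ 2 ≤
        1 / (4 * (n + 2)) - 1 / (4 * ((n + 1 : ℕ) + 2)) := by
      push_cast
      rw [div_sub_div _ _ (by positivity) (by positivity),
        div_le_div_iff₀ (by positivity) (by positivity)]
      nlinarith
    rw [sum_range_succ]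
    linarith

theorem sum_odd_one_div_sq_le (N : ℕ) : ∑ d ∈ Ioc 1 N with Odd d, 1 / (d : ℝ) ^ 2 ≤ 17 / 72 := by
  have hsub : (Ioc 1 N).filter Odd ⊆ (range (N + 1)).image (2 * · + 3) := by
    intro d hd
    rw [mem_filter, mem_Ioc] at hd
    exact mem_image.2 ⟨(d - 3) / 2, mem_range.2 (by omega), by grind⟩
  calc ∑ d ∈ Ioc 1 N with Odd d, 1 / (d : ℝ) ^ 2
      ≤ ∑ d ∈ (range (N + 1)).image fun j : ℕ ↦ 2 * j + 3, 1 / (d : ℝ) ^ 2 :=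
        sum_le_sum_of_subset_of_nonneg hsub fun _ _ _ ↦ by positivity
    _ = ∑ j ∈ range (N + 1), 1 / (2 * (j : ℝ) + 3) ^ 2 := by
        rw [sum_image fun i _ j _ h ↦ by simpa using h]
        push_cast
        rfl
    _ ≤ 17 / 72 := (sum_range_one_div_sq_le N).trans (sub_le_self _ (by positivity))

theorem sum_odd_totient_le_sq (n : ℕ) : ∑ q ∈ Ioc 0 n with Odd q, q.totient ≤ n ^ 2 :=
  calc ∑ q ∈ Ioc 0 n with Odd q, q.totient
      ≤ ∑ q ∈ Ioc 0 n with Odd q, q := sum_le_sum fun q _ ↦ q.totient_le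
    _ = ((n + 1) / 2) ^ 2 := sum_Ioc_odd n
    _ ≤ n ^ 2 := Nat.pow_le_pow_left (by omega) 2

theorem sq_div_le_sum_odd_totient (N : ℕ) :
    1 / 72 * (N : ℝ) ^ 2 ≤ ∑ q ∈ Ioc 0 N with Odd q, q.totient := by
  rcases N.eq_zero_or_pos with rfl | hN
  · simp
  set S : ℕ → ℕ := fun n ↦ ∑ q ∈ Ioc 0 n with Odd q, q.totient
  have hsplit : S N + ∑ d ∈ Ioc 1 N with Odd d, S (N / d) = ((N + 1) / 2) ^ 2 := by
    rw [← sum_Ioc_odd, ← sum_odd_sum_odd_totient, ← insert_Ioc_add_one_left_eq_Ioc hN,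
      zero_add, filter_insert, if_pos odd_one, sum_insert (by simp), Nat.div_one]
  have hrest : ∑ d ∈ Ioc 1 N with Odd d, (S (N / d) : ℝ) ≤ 17 / 72 * N ^ 2 :=
    calc ∑ d ∈ Ioc 1 N with Odd d, (S (N / d) : ℝ)
        ≤ ∑ d ∈ Ioc 1 N with Odd d, 1 / (d : ℝ) ^ 2 * N ^ 2 := by
          gcongr with d
          calc (S (N / d) : ℝ) ≤ ((N / d : ℕ) : ℝ) ^ 2 := mod_cast sum_odd_totient_le_sq (N / d)
            _ ≤ (N / d : ℝ) ^ 2 := by gcongr; exact Nat.cast_div_le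
            _ = 1 / (d : ℝ) ^ 2 * N ^ 2 := by ring
      _ ≤ 17 / 72 * N ^ 2 := by
          rw [← sum_mul]
          gcongr
          exact sum_odd_one_div_sq_le N
  have hhalf : (N / 2 : ℝ) ^ 2 ≤ (((N + 1) / 2 : ℕ) : ℝ) ^ 2 := by
    have : N ≤ 2 * ((N + 1) / 2) := by omega
    have : (N : ℝ) ≤ 2 * ((N + 1) / 2 : ℕ) := mod_cast this
    gcongr
    linarith
  have hsplit' : (S N : ℝ) + ∑ d ∈ Ioc 1 N with Odd d, (S (N / d) : ℝ) =
      (((N + 1) / 2 : ℕ) : ℝ) ^ 2 := mod_cast hsplit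
  linarith

end OddTotientSum

/-- Khinchin-type theorem with even numerators: if `ψ` is positive, non-increasing and
`∑ ψ(q)` diverges, then for Lebesgue a.e. `ω` there are infinitely many `q ≥ 1` admitting
an even `p` coprime to `q` with `|qω - p| < ψ(q)`. -/
theorem stmt_15 (ψ : ℕ → ℝ)
    (hpos : ∀ q, 1 ≤ q → 0 < ψ q)
    (hmono : ∀ q₁ q₂, 1 ≤ q₁ → q₁ ≤ q₂ → ψ q₂ ≤ ψ q₁)
    (hdiv : Filter.Tendsto (fun N => ∑ q ∈ Finset.Icc 1 N, ψ q)
      Filter.atTop Filter.atTop) :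
    ∀ᵐ ω ∂(volume : Measure ℝ),
      {q : ℕ | 1 ≤ q ∧ ∃ p : ℤ, Even p ∧ Int.gcd p (q : ℤ) = 1 ∧
        |(q : ℝ) * ω - (p : ℝ)| < ψ q}.Infinite := by
  have : Fact ((0 : ℝ) < 2) := ⟨two_pos⟩
  have hae : ∀ᵐ x : AddCircle (2 : ℝ),
      x ∈ addWellApproximable (AddCircle (2 : ℝ)) fun q ↦ if Odd q then ψ q / q else 0 :=
    ae_mem_addWellApproximable (by norm_num) sq_div_le_sum_odd_totient
      (fun q hq ↦ (hpos q hq).le) (fun q₁ hq₁ q₂ _ hle ↦ hmono q₁ q₂ hq₁ hle)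
      (not_summable_of_tendsto_sum_atTop hdiv)
  filter_upwards [ae_coe_of_ae_addCircle hae] with ω hω
  rw [mem_addWellApproximable_iff_infinite] at hω
  refine hω.mono ?_
  rintro q ⟨hq, hωq⟩
  refine ⟨hq, ?_⟩
  by_cases hodd : Odd q
  · rw [if_pos hodd] at hωq
    exact exists_even_of_mem_approxAddOrderOf hodd hωq
  · simp [hodd, approxAddOrderOf, Metric.thickening_of_nonpos] at hωq
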